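/- Let S > 0, 0 < δ₁ < S, δ₂ > 0, r > 0, κ₀ ≥ 0, M > 0, K ≥ 0, ε₁, ε₂ ≥ 0. Let χ : [0,S] × ∂Ω → [0,∞) be continuous with χ(t,x) = δ₂ for all (t,x) ∈ [δ₁,S] × ∂Ω. Let F₁ : [0,S] × cl(Ω) × ℝ → ℝ be continuous, twice continuously differentiable in the last variable, with F₁(t,x,0) = 0, ∂²_uF₁(t,x,u) ≤ 0 for u ≥ 0, ∂²_uF₁(t,x,u) ≥ 0 for u ≤ 0, and ∂_uF₁(t,x,0) ≤ κ₀; let F₂ : [0,S] × cl(Ω) × ℝ → ℝ be continuous and continuously differentiable in the last variable with F₂(t,x,0) = 0 and |∂_uF₂(t,x,u)| ≤ K for all (t,x) and all |u| ≤ M. For j = 1,2 and each λ ∈ [−r,r], let v_{j,λ}, v⁽¹⁾_{j,λ} : [0,S] × cl(Ω) → ℝ with V_{j,λ}(t,x) := ∂_uF_j(t,x,v_{j,λ}(t,x)), and for j = 1 let also v⁽²⁾_{1,λ} be given, such that: v_{1,λ} is a classical solution of ∂_t v − Δv + F₁(t,x,v) = 0 in (0,S) × Ω with lateral boundary values λχ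 and zero initial values; v⁽¹⁾_{1,λ} is a classical solution of ∂_t u − Δu + V_{1,λ} u = 0 with lateral boundary values χ and zero initial values; v⁽²⁾_{1,λ} is a classical solution of ∂_t u − Δu + V_{1,λ} u = −∂²_uF₁(t,x,v_{1,λ}(t,x)) (v⁽¹⁾_{1,λ}(t,x))² with zero lateral boundary values and zero initial values; v_{j,0} ≡ 0 for j = 1,2; for each (t,x), λ ↦ v_{j,λ}(t,x) is continuous on [−r,r] and differentiable on (−r,r) with derivative v⁽¹⁾_{j,λ}(t,x) depending continuously on λ, and λ ↦ v⁽¹⁾_{1,λ}(t,x) is differentiable on (−r,r) with derivative v⁽²⁾_{1,λ}(t,x). Assume moreover |v_{j,λ}(t,x)| ≤ M and |v⁽¹⁾_{1,λ}(t,x)| ≤ M for all j, λ, (t,x), and that |V_{1,λ}(t,x) − V_{2,λ}(t,x)| ≤ ε₁ and |v⁽¹⁾_{1,λ}(t,x) − v⁽¹⁾_{2,λ}(t,x)| ≤ ε₂ for all λ ∈ (−r,r) and (t,x). Let y be a classical solution of ∂_t y − Δy + κ₀ y = 0 in (0,S) × Ω with lateral boundary values χ and zero initial values, and set a₂ :=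 inf { y(t,x) : (t,x) ∈ [δ₁,S] × cl(Ω) }. Then a₂ > 0 and, for all (t,x) ∈ (δ₁,S) × Ω and all s ∈ [−a₂ r, a₂ r]: |F₁(t,x,s) − F₂(t,x,s)| ≤ 2r(M ε₁ + 2K ε₂). -/

import Mathlib

open Set

namespace Paper

noncomputable section

/-- Time derivative `∂ₜu`. -/
def timeDeriv {n : ℕ} (u : ℝ → (Fin n → ℝ) → ℝ) (t : ℝ) (x : Fin n → ℝ) : ℝ :=
  deriv (fun s => u s x) t

/-- Spatial partial derivative `∂ᵢu`. -/
def spatialDeriv {n : ℕ} (u : ℝ → (Fin n → ℝ) → ℝ) (i : Fin n) (t : ℝ) (x : Fin n → ℝ) : ℝ :=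
  deriv (fun s => u t (Function.update x i s)) (x i)

/-- Second spatial partial derivative `∂ᵢ∂ⱼu`. -/
def spatialDeriv2 {n : ℕ} (u : ℝ → (Fin n → ℝ) → ℝ) (i j : Fin n) (t : ℝ)
    (x : Fin n → ℝ) : ℝ :=
  spatialDeriv (spatialDeriv u j) i t x

/-- Laplacian in the space variables. -/
def laplacian {n : ℕ} (u : ℝ → (Fin n → ℝ) → ℝ) (t : ℝ) (x : Fin n → ℝ) : ℝ :=
  ∑ i, spatialDeriv2 u i i t x

/-- Parabolic regularity: `u` is continuous on `[0,S] × cl Ω`, and `∂ₜu` together with all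
spatial partial derivatives of `u` up to order 2 exist and are continuous on `(0,S) × Ω`. -/
structure ParabolicRegular {n : ℕ} (Ω : Set (Fin n → ℝ)) (S : ℝ)
    (u : ℝ → (Fin n → ℝ) → ℝ) : Prop where
  cont : ContinuousOn (fun p : ℝ × (Fin n → ℝ) => u p.1 p.2) (Icc 0 S ×ˢ closure Ω)
  diff_t : ∀ t ∈ Ioo 0 S, ∀ x ∈ Ω, DifferentiableAt ℝ (fun s => u s x) t
  diff_x : ∀ t ∈ Ioo 0 S, ∀ x ∈ Ω, ∀ i,
    DifferentiableAt ℝ (fun s => u t (Function.update x i s)) (x i)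
  diff_xx : ∀ t ∈ Ioo 0 S, ∀ x ∈ Ω, ∀ i j,
    DifferentiableAt ℝ (fun s => spatialDeriv u j t (Function.update x i s)) (x i)
  cont_t : ContinuousOn (fun p : ℝ × (Fin n → ℝ) => timeDeriv u p.1 p.2) (Ioo 0 S ×ˢ Ω)
  cont_x : ∀ i, ContinuousOn (fun p : ℝ × (Fin n → ℝ) => spatialDeriv u i p.1 p.2)
    (Ioo 0 S ×ˢ Ω)
  cont_xx : ∀ i j, ContinuousOn (fun p : ℝ × (Fin n → ℝ) => spatialDeriv2 u i j p.1 p.2)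
    (Ioo 0 S ×ˢ Ω)

/-- Classical solution of `∂ₜu − Δu + c u = f` in `(0,S) × Ω` with lateral boundary values `g`
and zero initial values. -/
structure IsClassicalSolution {n : ℕ} (Ω : Set (Fin n → ℝ)) (S : ℝ)
    (c f g u : ℝ → (Fin n → ℝ) → ℝ) extends ParabolicRegular Ω S u : Prop where
  eqn : ∀ t ∈ Ioo 0 S, ∀ x ∈ Ω, timeDeriv u t x - laplacian u t x + c t x * u t x = f t x
  lateral : ∀ t ∈ Icc 0 S, ∀ x ∈ frontier Ω, u t x = g t x
  initial : ∀ x ∈ closure Ω, u 0 x = 0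

/-- `∂_u F` for a semilinear term `F(t,x,u)`. -/
def uDeriv {n : ℕ} (F : ℝ → (Fin n → ℝ) → ℝ → ℝ) (t : ℝ) (x : Fin n → ℝ) (u : ℝ) : ℝ :=
  deriv (F t x) u

/-- `∂_u² F`. -/
def uDeriv2 {n : ℕ} (F : ℝ → (Fin n → ℝ) → ℝ → ℝ) : ℝ → (Fin n → ℝ) → ℝ → ℝ :=
  uDeriv (uDeriv F)

/-- `∂_u³ F`. -/
def uDeriv3 {n : ℕ} (F : ℝ → (Fin n → ℝ) → ℝ → ℝ) : ℝ → (Fin n → ℝ) → ℝ → ℝ :=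
  uDeriv (uDeriv2 F)

/-- `∂_u⁴ F`. -/
def uDeriv4 {n : ℕ} (F : ℝ → (Fin n → ℝ) → ℝ → ℝ) : ℝ → (Fin n → ℝ) → ℝ → ℝ :=
  uDeriv (uDeriv3 F)

/-- `∂ₜF` for `F` depending on `(t,x,u)`. -/
def FtDeriv {n : ℕ} (F : ℝ → (Fin n → ℝ) → ℝ → ℝ) (t : ℝ) (x : Fin n → ℝ) (u : ℝ) : ℝ :=
  deriv (fun s => F s x u) t

/-- `∂_{xᵢ}F` for `F` depending on `(t,x,u)`. -/
def FxDeriv {n : ℕ} (F : ℝ → (Fin n → ℝ) → ℝ → ℝ) (i : Fin n) (t : ℝ) (x : Fin n → ℝ)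
    (u : ℝ) : ℝ :=
  deriv (fun s => F t (Function.update x i s) u) (x i)

/-- `F` is continuous on `[0,S] × cl Ω × ℝ` and continuously differentiable in the last
variable. -/
def C1InU {n : ℕ} (Ω : Set (Fin n → ℝ)) (S : ℝ) (F : ℝ → (Fin n → ℝ) → ℝ → ℝ) : Prop :=
  ContinuousOn (fun p : ℝ × (Fin n → ℝ) × ℝ => F p.1 p.2.1 p.2.2)
    (Icc 0 S ×ˢ closure Ω ×ˢ (univ : Set ℝ)) ∧
  (∀ t ∈ Icc 0 S, ∀ x ∈ closure Ω, ∀ u : ℝ, DifferentiableAt ℝ (F t x) u) ∧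
  ContinuousOn (fun p : ℝ × (Fin n → ℝ) × ℝ => uDeriv F p.1 p.2.1 p.2.2)
    (Icc 0 S ×ˢ closure Ω ×ˢ (univ : Set ℝ))

/-- `F` is continuous and twice continuously differentiable in the last variable. -/
def C2InU {n : ℕ} (Ω : Set (Fin n → ℝ)) (S : ℝ) (F : ℝ → (Fin n → ℝ) → ℝ → ℝ) : Prop :=
  C1InU Ω S F ∧
  (∀ t ∈ Icc 0 S, ∀ x ∈ closure Ω, ∀ u : ℝ, DifferentiableAt ℝ (uDeriv F t x) u) ∧
  ContinuousOn (fun p : ℝ × (Fin n → ℝ) × ℝ => uDeriv2 F p.1 p.2.1 p.2.2)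
    (Icc 0 S ×ˢ closure Ω ×ˢ (univ : Set ℝ))

/-- `‖f‖_{W^{1,∞}} ≤ B` on `[0,S] × cl Ω`, stated componentwise: `f`, `∂ₜf` and all `∂ᵢf`
are bounded by `B` in absolute value. -/
def W1infLE {n : ℕ} (Ω : Set (Fin n → ℝ)) (S : ℝ) (f : ℝ → (Fin n → ℝ) → ℝ) (B : ℝ) : Prop :=
  ∀ t ∈ Icc 0 S, ∀ x ∈ closure Ω,
    |f t x| ≤ B ∧ |timeDeriv f t x| ≤ B ∧ ∀ i, |spatialDeriv f i t x| ≤ B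

/-- `f` has bounded continuous first-order derivatives on `[0,S] × cl Ω`. -/
def C1Bounded {n : ℕ} (Ω : Set (Fin n → ℝ)) (S : ℝ) (f : ℝ → (Fin n → ℝ) → ℝ) : Prop :=
  (∀ t ∈ Icc 0 S, ∀ x ∈ closure Ω, DifferentiableAt ℝ (fun s => f s x) t ∧
    ∀ i, DifferentiableAt ℝ (fun s => f t (Function.update x i s)) (x i)) ∧
  ContinuousOn (fun p : ℝ × (Fin n → ℝ) => f p.1 p.2) (Icc 0 S ×ˢ closure Ω) ∧
  ContinuousOn (fun p : ℝ × (Fin n → ℝ) => timeDeriv f p.1 p.2) (Icc 0 S ×ˢ closure Ω) ∧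
  (∀ i, ContinuousOn (fun p : ℝ × (Fin n → ℝ) => spatialDeriv f i p.1 p.2)
    (Icc 0 S ×ˢ closure Ω)) ∧
  ∃ B, W1infLE Ω S f B

/-- Componentwise bound `‖f‖_* ≤ ε` for the parabolic Schauder norm of
`C([0,S];C^{2+α}(cl Ω)) ∩ C^{1+α/2}([0,S];C(cl Ω))`: sup bounds on `f`, `∂ₜf`, spatial
derivatives up to order 2, the `α`-Hölder (in `x`) seminorms of the second spatial derivatives,
and the `α/2`-Hölder (in `t`) seminorm of `∂ₜf`. -/
def SchauderLE {n : ℕ} (α : ℝ) (Ω : Set (Fin n → ℝ)) (S : ℝ) (f : ℝ → (Fin n → ℝ) → ℝ)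
    (ε : ℝ) : Prop :=
  (∀ t ∈ Icc 0 S, ∀ x ∈ closure Ω,
    |f t x| ≤ ε ∧ |timeDeriv f t x| ≤ ε ∧ (∀ i, |spatialDeriv f i t x| ≤ ε) ∧
    ∀ i j, |spatialDeriv2 f i j t x| ≤ ε) ∧
  (∀ t ∈ Icc 0 S, ∀ x ∈ closure Ω, ∀ x' ∈ closure Ω, ∀ i j,
    |spatialDeriv2 f i j t x - spatialDeriv2 f i j t x'| ≤ ε * dist x x' ^ α) ∧
  (∀ x ∈ closure Ω, ∀ t ∈ Icc 0 S, ∀ t' ∈ Icc 0 S,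
    |timeDeriv f t x - timeDeriv f t' x| ≤ ε * |t - t'| ^ (α / 2))

/-- `G`, `∂ₜG` and the `∂_{xᵢ}G` exist and are continuous on `[0,S] × cl Ω × ℝ`. -/
def C1InTX {n : ℕ} (Ω : Set (Fin n → ℝ)) (S : ℝ) (G : ℝ → (Fin n → ℝ) → ℝ → ℝ) : Prop :=
  (∀ t ∈ Icc 0 S, ∀ x ∈ closure Ω, ∀ u : ℝ,
    DifferentiableAt ℝ (fun s => G s x u) t ∧
    ∀ i, DifferentiableAt ℝ (fun s => G t (Function.update x i s) u) (x i)) ∧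
  ContinuousOn (fun p : ℝ × (Fin n → ℝ) × ℝ => G p.1 p.2.1 p.2.2)
    (Icc 0 S ×ˢ closure Ω ×ˢ (univ : Set ℝ)) ∧
  ContinuousOn (fun p : ℝ × (Fin n → ℝ) × ℝ => FtDeriv G p.1 p.2.1 p.2.2)
    (Icc 0 S ×ˢ closure Ω ×ˢ (univ : Set ℝ)) ∧
  ∀ i, ContinuousOn (fun p : ℝ × (Fin n → ℝ) × ℝ => FxDeriv G i p.1 p.2.1 p.2.2)
    (Icc 0 S ×ˢ closure Ω ×ˢ (univ : Set ℝ))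

/-- `G`, `∂ₜG` and the `∂_{xᵢ}G` are bounded by `κ(|u|)` on `[0,S] × cl Ω`, for every `u`. -/
def BoundedByKappa {n : ℕ} (Ω : Set (Fin n → ℝ)) (S : ℝ) (G : ℝ → (Fin n → ℝ) → ℝ → ℝ)
    (κ : ℝ → ℝ) : Prop :=
  ∀ u : ℝ, ∀ t ∈ Icc 0 S, ∀ x ∈ closure Ω,
    |G t x u| ≤ κ |u| ∧ |FtDeriv G t x u| ≤ κ |u| ∧ ∀ i, |FxDeriv G i t x u| ≤ κ |u|

/-- The family of solutions of the semilinear problem with boundary data `λχ`, together with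
its first and second linearizations in the boundary parameter `λ`. -/
structure SemilinearFamily {n : ℕ} (Ω : Set (Fin n → ℝ)) (S r : ℝ)
    (χ : ℝ → (Fin n → ℝ) → ℝ) (F : ℝ → (Fin n → ℝ) → ℝ → ℝ)
    (v v1 v2 : ℝ → ℝ → (Fin n → ℝ) → ℝ) : Prop where
  sol : ∀ lam ∈ Icc (-r) r, IsClassicalSolution Ω S (fun _ _ => (0 : ℝ))
      (fun t x => -F t x (v lam t x)) (fun t x => lam * χ t x) (v lam)
  zero : ∀ t ∈ Icc 0 S, ∀ x ∈ closure Ω, v 0 t x = 0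
  lin1 : ∀ lam ∈ Icc (-r) r, IsClassicalSolution Ω S
      (fun t x => uDeriv F t x (v lam t x)) (fun _ _ => (0 : ℝ)) χ (v1 lam)
  lin2 : ∀ lam ∈ Icc (-r) r, IsClassicalSolution Ω S
      (fun t x => uDeriv F t x (v lam t x))
      (fun t x => -uDeriv2 F t x (v lam t x) * (v1 lam t x) ^ 2) (fun _ _ => (0 : ℝ)) (v2 lam)
  cont_lam : ∀ t ∈ Icc 0 S, ∀ x ∈ closure Ω, ContinuousOn (fun lam => v lam t x) (Icc (-r) r)
  deriv1 : ∀ t ∈ Icc 0 S, ∀ x ∈ closure Ω, ∀ lam ∈ Ioo (-r) r,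
      HasDerivAt (fun μ => v μ t x) (v1 lam t x) lam
  deriv2 : ∀ t ∈ Icc 0 S, ∀ x ∈ closure Ω, ∀ lam ∈ Ioo (-r) r,
      HasDerivAt (fun μ => v1 μ t x) (v2 lam t x) lam

end

end Paper

open Paper Set

/-! The potential `∂ᵤF₁(t,x,v₁)` is at most `κ₀`, so by comparison the first linearization `w₁`
dominates `y`, which in turn is strictly positive on `[δ₁,S] × cl Ω` by comparison with a travelling
exponential. Hence `∂_λ v₁ = w₁ ≥ a₂` there, and by the intermediate value theorem `λ ↦ v₁` attains
every `s ∈ [-a₂r, a₂r]`. At `s = v₁`, split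
`F₁(v₁) - F₂(v₁) = (F₁(v₁) - F₂(v₂)) + (F₂(v₂) - F₂(v₁))`: the first term vanishes at `λ = 0` and
has `λ`-derivative `(V₁ - V₂) w₁ + V₂ (w₁ - w₂)`, and the second is controlled by `v₁ - v₂`, whose
`λ`-derivative is `w₁ - w₂`. -/

namespace Paper

open Filter Topology

/-! ### One-variable calculus -/

section Calculus

lemma deriv_deriv_nonneg_of_isLocalMin {f : ℝ → ℝ} {a : ℝ} (hmin : IsLocalMin f a)
    (hf : ContinuousAt f a) : 0 ≤ deriv (deriv f) a := by
  by_contra! hneg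
  -- A negative second derivative would make `a` a local maximum as well: `f` is constant nearby.
  have hmax : IsLocalMax f a := by
    have hneg_pos : 0 < deriv (deriv (-f)) a := by
      have : deriv (-f) = -deriv f := funext fun _ => deriv.neg
      rw [this, deriv.neg]
      exact neg_pos.2 hneg
    simpa using (isLocalMin_of_deriv_deriv_pos hneg_pos
      (by rw [deriv.neg, hmin.deriv_eq_zero, neg_zero]) hf.neg).neg
  have hconst : f =ᶠ[𝓝 a] fun _ => f a :=
    (hmin.and hmax).mono fun _ h => le_antisymm h.2 h.1
  have : deriv (deriv f) a = 0 := by simpa using hconst.deriv.deriv_eq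
  exact hneg.ne this

lemma nonpos_of_hasDerivAt_of_isMinOn_Icc {g : ℝ → ℝ} {a t d : ℝ} (hat : a < t)
    (hg : HasDerivAt g d t) (hmin : IsMinOn g (Icc a t) t) : d ≤ 0 := by
  have hcone : a - t ∈ posTangentConeAt (Icc a t) t :=
    sub_mem_posTangentConeAt_of_segment_subset
      ((convex_Icc a t).segment_subset (right_mem_Icc.2 hat.le) (left_mem_Icc.2 hat.le))
  have hdir : 0 ≤ (a - t) * d := by
    simpa using hmin.localize.hasFDerivWithinAt_nonneg hg.hasFDerivAt.hasFDerivWithinAt hcone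
  exact nonpos_of_mul_nonneg_right hdir (sub_neg.2 hat)

lemma le_mul_of_hasDerivAt_of_isMinOn_exp_mul {g : ℝ → ℝ} {a t d μ : ℝ} (hat : a < t)
    (hg : HasDerivAt g d t) (hmin : IsMinOn (fun s => Real.exp (-μ * s) * g s) (Icc a t) t) :
    d ≤ μ * g t := by
  have hexp : HasDerivAt (fun s => Real.exp (-μ * s)) (Real.exp (-μ * t) * -μ) t := by
    simpa using ((hasDerivAt_id t).const_mul (-μ)).exp
  have hle : Real.exp (-μ * t) * (d - μ * g t) ≤ 0 := by
    linarith [nonpos_of_hasDerivAt_of_isMinOn_Icc hat (hexp.mul hg) hmin]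
  exact sub_nonpos.1 (nonpos_of_mul_nonpos_right hle (Real.exp_pos _))

lemma abs_sub_le_of_abs_deriv_le {g g' : ℝ → ℝ} {a b C : ℝ} (hc : ContinuousOn g (Icc a b))
    (hd : ∀ s ∈ Ioo a b, HasDerivAt g (g' s) s) (hC : ∀ s ∈ Ioo a b, |g' s| ≤ C)
    {s t : ℝ} (hs : s ∈ Icc a b) (ht : t ∈ Icc a b) : |g t - g s| ≤ C * |t - s| := by
  wlog hst : s ≤ t generalizing s t
  · rw [abs_sub_comm, abs_sub_comm t]
    exact this ht hs (le_of_not_ge hst)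
  have hdiff : DifferentiableOn ℝ g (interior (Icc a b)) := by
    rw [interior_Icc]
    exact fun l hl => (hd l hl).differentiableAt.differentiableWithinAt
  have hderiv : ∀ l ∈ interior (Icc a b), |deriv g l| ≤ C := by
    rw [interior_Icc]
    exact fun l hl => (hd l hl).deriv ▸ hC l hl
  have hlower := (convex_Icc a b).mul_sub_le_image_sub_of_le_deriv hc hdiff
    (fun l hl => (abs_le.1 (hderiv l hl)).1) s hs t ht hst
  have hupper := (convex_Icc a b).image_sub_le_mul_sub_of_deriv_le hc hdiff
    (fun l hl => (abs_le.1 (hderiv l hl)).2) s hs t ht hst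
  rw [abs_of_nonneg (sub_nonneg.2 hst), abs_le]
  constructor <;> linarith

lemma Icc_subset_image_of_le_deriv {g g' : ℝ → ℝ} {r A : ℝ} (hr : 0 ≤ r)
    (hc : ContinuousOn g (Icc (-r) r)) (h0 : g 0 = 0)
    (hd : ∀ l ∈ Ioo (-r) r, HasDerivAt g (g' l) l) (hA : ∀ l ∈ Ioo (-r) r, A ≤ g' l) :
    Icc (-(A * r)) (A * r) ⊆ g '' Icc (-r) r := by
  have hgrowth := (convex_Icc (-r) r).mul_sub_le_image_sub_of_le_deriv (C := A) hc
    (by rw [interior_Icc]; exact fun l hl => (hd l hl).differentiableAt.differentiableWithinAt)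
    (by rw [interior_Icc]; exact fun l hl => (hd l hl).deriv ▸ hA l hl)
  have hright := hgrowth 0 (by simpa) r (by simpa) hr
  have hleft := hgrowth (-r) (by simpa) 0 (by simpa) (by simpa)
  exact (Icc_subset_Icc (by linarith) (by linarith)).trans
    (intermediate_value_Icc (by linarith) hc)

lemma abs_mul_sub_mul_le {p₁ p₂ q₁ q₂ M K ε₁ ε₂ : ℝ} (hq₁ : |q₁| ≤ M) (hp₂ : |p₂| ≤ K)
    (hp : |p₁ - p₂| ≤ ε₁) (hq : |q₁ - q₂| ≤ ε₂) :
    |p₁ * q₁ - p₂ * q₂| ≤ M * ε₁ + K * ε₂ :=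
  calc |p₁ * q₁ - p₂ * q₂| = |q₁ * (p₁ - p₂) + p₂ * (q₁ - q₂)| := by ring_nf
    _ ≤ |q₁| * |p₁ - p₂| + |p₂| * |q₁ - q₂| := by
        rw [← abs_mul, ← abs_mul]
        exact abs_add_le _ _
    _ ≤ M * ε₁ + K * ε₂ := by
        have hM : 0 ≤ M := (abs_nonneg q₁).trans hq₁
        have hK : 0 ≤ K := (abs_nonneg p₂).trans hp₂
        gcongr

lemma abs_sub_le_of_abs_deriv_comp_sub_le {f₁ f₂ v₁ v₂ w₁ w₂ : ℝ → ℝ} {r M K ε₁ ε₂ : ℝ}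
    (hr : 0 < r) (hf₁ : Differentiable ℝ f₁) (hf₂ : Differentiable ℝ f₂) (hf0 : f₁ 0 = f₂ 0)
    (hf₂K : ∀ u, |u| ≤ M → |deriv f₂ u| ≤ K)
    (hv₁ : ContinuousOn v₁ (Icc (-r) r)) (hv₂ : ContinuousOn v₂ (Icc (-r) r))
    (hv₁0 : v₁ 0 = 0) (hv₂0 : v₂ 0 = 0)
    (hw₁ : ∀ l ∈ Ioo (-r) r, HasDerivAt v₁ (w₁ l) l)
    (hw₂ : ∀ l ∈ Ioo (-r) r, HasDerivAt v₂ (w₂ l) l)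
    (hM : ∀ l ∈ Icc (-r) r, |v₁ l| ≤ M ∧ |v₂ l| ≤ M ∧ |w₁ l| ≤ M)
    (hε : ∀ l ∈ Ioo (-r) r,
      |deriv f₁ (v₁ l) - deriv f₂ (v₂ l)| ≤ ε₁ ∧ |w₁ l - w₂ l| ≤ ε₂)
    {l : ℝ} (hl : l ∈ Icc (-r) r) :
    |f₁ (v₁ l) - f₂ (v₁ l)| ≤ r * (M * ε₁ + 2 * K * ε₂) := by
  have h0 : (0 : ℝ) ∈ Ioo (-r) r := by simpa
  have hlr : |l - 0| ≤ r := by rw [sub_zero]; exact abs_le.2 hl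
  have hε₁0 : 0 ≤ ε₁ := (abs_nonneg _).trans (hε 0 h0).1
  have hε₂0 : 0 ≤ ε₂ := (abs_nonneg _).trans (hε 0 h0).2
  have hM0 : 0 ≤ M := (abs_nonneg _).trans (hM l hl).1
  have hK0 : 0 ≤ K := (abs_nonneg _).trans (hf₂K 0 (by simpa))
  have hcomp : |f₁ (v₁ l) - f₂ (v₂ l)| ≤ (M * ε₁ + K * ε₂) * |l - 0| := by
    simpa [hv₁0, hv₂0, hf0] using abs_sub_le_of_abs_deriv_le
      (g := fun s => f₁ (v₁ s) - f₂ (v₂ s))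
      ((hf₁.continuous.comp_continuousOn hv₁).sub (hf₂.continuous.comp_continuousOn hv₂))
      (fun s hs => ((hf₁ _).hasDerivAt.comp s (hw₁ s hs)).sub
        ((hf₂ _).hasDerivAt.comp s (hw₂ s hs)))
      (fun s hs => abs_mul_sub_mul_le (hM s (Ioo_subset_Icc_self hs)).2.2
        (hf₂K _ (hM s (Ioo_subset_Icc_self hs)).2.1) (hε s hs).1 (hε s hs).2)
      (Ioo_subset_Icc_self h0) hl
  have hcurves : |v₁ l - v₂ l| ≤ ε₂ * |l - 0| := by
    simpa [hv₁0, hv₂0] using abs_sub_le_of_abs_deriv_le (g := fun s => v₁ s - v₂ s)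
      (hv₁.sub hv₂) (fun s hs => (hw₁ s hs).sub (hw₂ s hs)) (fun s hs => (hε s hs).2)
      (Ioo_subset_Icc_self h0) hl
  have hLipschitz : |f₂ (v₂ l) - f₂ (v₁ l)| ≤ K * |v₁ l - v₂ l| := by
    rw [abs_sub_comm (v₁ l)]
    exact (convex_Icc (-M) M).norm_image_sub_le_of_norm_deriv_le (fun u _ => hf₂ u)
      (fun u hu => hf₂K u (abs_le.2 hu)) (abs_le.1 (hM l hl).1) (abs_le.1 (hM l hl).2.1)
  calc |f₁ (v₁ l) - f₂ (v₁ l)|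
      ≤ |f₁ (v₁ l) - f₂ (v₂ l)| + |f₂ (v₂ l) - f₂ (v₁ l)| := abs_sub_le _ _ _
    _ ≤ (M * ε₁ + K * ε₂) * |l - 0| + K * (ε₂ * |l - 0|) := by
        gcongr
        exact hLipschitz.trans (by gcongr)
    _ = |l - 0| * (M * ε₁ + 2 * K * ε₂) := by ring
    _ ≤ r * (M * ε₁ + 2 * K * ε₂) := by gcongr

end Calculus

/-! ### The heat operator -/

section HeatOperator

variable {n : ℕ} {Ω : Set (Fin n → ℝ)} {S : ℝ} {u w : ℝ → (Fin n → ℝ) → ℝ}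

/-- The heat operator `∂ₜu − Δu`. -/
noncomputable def heatOp (u : ℝ → (Fin n → ℝ) → ℝ) (t : ℝ) (x : Fin n → ℝ) : ℝ :=
  timeDeriv u t x - laplacian u t x

lemma IsClassicalSolution.heatOp_add_mul_eq {c f g : ℝ → (Fin n → ℝ) → ℝ}
    (hu : IsClassicalSolution Ω S c f g u) {t : ℝ} (ht : t ∈ Ioo 0 S) {x : Fin n → ℝ}
    (hx : x ∈ Ω) : heatOp u t x + c t x * u t x = f t x :=
  hu.eqn t ht x hx

lemma eventually_update_mem (hΩ : IsOpen Ω) {x : Fin n → ℝ} (hx : x ∈ Ω) (i : Fin n) :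
    ∀ᶠ s in 𝓝 (x i), Function.update x i s ∈ Ω :=
  (hasDerivAt_update x i (x i)).continuousAt.eventually_mem
    (hΩ.mem_nhds (by rwa [Function.update_eq_self]))

lemma spatialDeriv_update (u : ℝ → (Fin n → ℝ) → ℝ) (i : Fin n) (t : ℝ) (x : Fin n → ℝ)
    (s : ℝ) : spatialDeriv u i t (Function.update x i s)
      = deriv (fun s' => u t (Function.update x i s')) s := by
  simp [spatialDeriv]

lemma spatialDeriv2_self_eq_deriv_deriv (u : ℝ → (Fin n → ℝ) → ℝ) (i : Fin n) (t : ℝ)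
    (x : Fin n → ℝ) :
    spatialDeriv2 u i i t x = deriv (deriv fun s => u t (Function.update x i s)) (x i) :=
  congrArg (deriv · (x i)) (funext (spatialDeriv_update u i t x))

lemma laplacian_nonneg_of_isLocalMin {t : ℝ} {x : Fin n → ℝ} (hmin : IsLocalMin (u t) x)
    (hc : ∀ i, ContinuousAt (fun s => u t (Function.update x i s)) (x i)) :
    0 ≤ laplacian u t x := by
  refine Finset.sum_nonneg fun i _ => ?_
  rw [spatialDeriv2_self_eq_deriv_deriv]
  refine deriv_deriv_nonneg_of_isLocalMin (f := u t ∘ Function.update x i) ?_ (hc i)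
  refine IsLocalMin.comp_continuous ?_ (hasDerivAt_update x i (x i)).continuousAt
  rwa [Function.update_eq_self]

namespace ParabolicRegular

lemma spatialDeriv_sub (hu : ParabolicRegular Ω S u) (hw : ParabolicRegular Ω S w)
    {t : ℝ} (ht : t ∈ Ioo 0 S) {x : Fin n → ℝ} (hx : x ∈ Ω) (i : Fin n) :
    spatialDeriv (u - w) i t x = spatialDeriv u i t x - spatialDeriv w i t x :=
  deriv_sub (hu.diff_x t ht x hx i) (hw.diff_x t ht x hx i)

lemma spatialDeriv_sub_update_eventuallyEq (hΩ : IsOpen Ω) (hu : ParabolicRegular Ω S u)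
    (hw : ParabolicRegular Ω S w) {t : ℝ} (ht : t ∈ Ioo 0 S) {x : Fin n → ℝ} (hx : x ∈ Ω)
    (i j : Fin n) :
    (fun s => spatialDeriv (u - w) j t (Function.update x i s)) =ᶠ[𝓝 (x i)]
      (fun s => spatialDeriv u j t (Function.update x i s)) -
        fun s => spatialDeriv w j t (Function.update x i s) :=
  (eventually_update_mem hΩ hx i).mono fun _ hs => spatialDeriv_sub hu hw ht hs j

lemma spatialDeriv2_sub (hΩ : IsOpen Ω) (hu : ParabolicRegular Ω S u)
    (hw : ParabolicRegular Ω S w) {t : ℝ} (ht : t ∈ Ioo 0 S) {x : Fin n → ℝ} (hx : x ∈ Ω)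
    (i j : Fin n) :
    spatialDeriv2 (u - w) i j t x = spatialDeriv2 u i j t x - spatialDeriv2 w i j t x :=
  (spatialDeriv_sub_update_eventuallyEq hΩ hu hw ht hx i j).deriv_eq.trans
    (deriv_sub (hu.diff_xx t ht x hx i j) (hw.diff_xx t ht x hx i j))

lemma timeDeriv_sub (hu : ParabolicRegular Ω S u) (hw : ParabolicRegular Ω S w)
    {t : ℝ} (ht : t ∈ Ioo 0 S) {x : Fin n → ℝ} (hx : x ∈ Ω) :
    timeDeriv (u - w) t x = timeDeriv u t x - timeDeriv w t x :=
  deriv_sub (hu.diff_t t ht x hx) (hw.diff_t t ht x hx)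

lemma heatOp_sub (hΩ : IsOpen Ω) (hu : ParabolicRegular Ω S u) (hw : ParabolicRegular Ω S w)
    {t : ℝ} (ht : t ∈ Ioo 0 S) {x : Fin n → ℝ} (hx : x ∈ Ω) :
    heatOp (u - w) t x = heatOp u t x - heatOp w t x := by
  simp only [heatOp, laplacian, timeDeriv_sub hu hw ht hx, spatialDeriv2_sub hΩ hu hw ht hx,
    Finset.sum_sub_distrib]
  ring

lemma sub (hΩ : IsOpen Ω) (hu : ParabolicRegular Ω S u) (hw : ParabolicRegular Ω S w) :
    ParabolicRegular Ω S (u - w) where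
  cont := hu.cont.sub hw.cont
  diff_t t ht x hx := (hu.diff_t t ht x hx).sub (hw.diff_t t ht x hx)
  diff_x t ht x hx i := (hu.diff_x t ht x hx i).sub (hw.diff_x t ht x hx i)
  diff_xx t ht x hx i j :=
    ((hu.diff_xx t ht x hx i j).sub (hw.diff_xx t ht x hx i j)).congr_of_eventuallyEq
      (spatialDeriv_sub_update_eventuallyEq hΩ hu hw ht hx i j)
  cont_t := (hu.cont_t.sub hw.cont_t).congr fun _ hp => timeDeriv_sub hu hw hp.1 hp.2
  cont_x i := ((hu.cont_x i).sub (hw.cont_x i)).congr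
    fun _ hp => spatialDeriv_sub hu hw hp.1 hp.2 i
  cont_xx i j := ((hu.cont_xx i j).sub (hw.cont_xx i j)).congr
    fun _ hp => spatialDeriv2_sub hΩ hu hw hp.1 hp.2 i j

end ParabolicRegular

end HeatOperator

/-! ### The weak minimum principle -/

section MinimumPrinciple

variable {n : ℕ} {Ω : Set (Fin n → ℝ)} {S a μ : ℝ} {u w : ℝ → (Fin n → ℝ) → ℝ}

lemma exists_neg_isMinOn_exp_mul (hΩ : IsOpen Ω) (hΩb : Bornology.IsBounded Ω)
    {b : ℝ} (hu : ContinuousOn (fun p : ℝ × (Fin n → ℝ) => u p.1 p.2) (Icc a b ×ˢ closure Ω))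
    (hlat : ∀ t ∈ Icc a b, ∀ x ∈ frontier Ω, 0 ≤ u t x) (hini : ∀ x ∈ closure Ω, 0 ≤ u a x)
    {x : Fin n → ℝ} (hab : a ≤ b) (hx : x ∈ closure Ω) (hneg : u b x < 0) (μ : ℝ) :
    ∃ t ∈ Ioc a b, ∃ z ∈ Ω, u t z < 0 ∧
      IsMinOn (fun p : ℝ × (Fin n → ℝ) => Real.exp (-μ * p.1) * u p.1 p.2)
        (Icc a b ×ˢ closure Ω) (t, z) := by
  obtain ⟨⟨t, z⟩, ⟨ht : t ∈ Icc a b, hz : z ∈ closure Ω⟩, hmin⟩ :=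
    (isCompact_Icc.prod hΩb.isCompact_closure).exists_isMinOn
      ⟨(b, x), right_mem_Icc.2 hab, hx⟩
      (f := fun p : ℝ × (Fin n → ℝ) => Real.exp (-μ * p.1) * u p.1 p.2)
      (ContinuousOn.mul (by fun_prop) hu)
  have hneg_min : u t z < 0 := by
    have hle : Real.exp (-μ * t) * u t z ≤ Real.exp (-μ * b) * u b x :=
      hmin (show (b, x) ∈ Icc a b ×ˢ closure Ω from ⟨right_mem_Icc.2 hab, hx⟩)
    exact (pos_iff_neg_of_mul_neg
      (hle.trans_lt (mul_neg_of_pos_of_neg (Real.exp_pos _) hneg))).1 (Real.exp_pos _)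
  have hat : t ≠ a := fun h => (h ▸ hneg_min).not_ge (hini z hz)
  have hzΩ : z ∈ Ω := by
    by_contra hzΩ
    exact hneg_min.not_ge (hlat t ht z (hΩ.frontier_eq ▸ ⟨hz, hzΩ⟩))
  exact ⟨t, ⟨ht.1.lt_of_ne' hat, ht.2⟩, z, hzΩ, hneg_min, hmin⟩

lemma heatOp_le_of_isMinOn_exp_mul (hΩ : IsOpen Ω) (hu : ParabolicRegular Ω S u) (ha : 0 ≤ a)
    {b t : ℝ} {z : Fin n → ℝ} (ht : t ∈ Ioc a b) (hbS : b < S) (hz : z ∈ Ω)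
    (hmin : IsMinOn (fun p : ℝ × (Fin n → ℝ) => Real.exp (-μ * p.1) * u p.1 p.2)
      (Icc a b ×ˢ closure Ω) (t, z)) :
    heatOp u t z ≤ μ * u t z := by
  have htS : t ∈ Ioo 0 S := ⟨ha.trans_lt ht.1, ht.2.trans_lt hbS⟩
  have htime : timeDeriv u t z ≤ μ * u t z := by
    refine le_mul_of_hasDerivAt_of_isMinOn_exp_mul ht.1 (hu.diff_t t htS z hz).hasDerivAt ?_
    exact fun s hs => hmin (show (s, z) ∈ Icc a b ×ˢ closure Ω from
      ⟨⟨hs.1, hs.2.trans ht.2⟩, subset_closure hz⟩)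
  have hspace : 0 ≤ laplacian u t z := by
    refine laplacian_nonneg_of_isLocalMin ?_ fun i => (hu.diff_x t htS z hz i).continuousAt
    filter_upwards [hΩ.mem_nhds hz] with x hx
    exact le_of_mul_le_mul_left (hmin (show (t, x) ∈ Icc a b ×ˢ closure Ω from
      ⟨Ioc_subset_Icc_self ht, subset_closure hx⟩)) (Real.exp_pos _)
  unfold heatOp
  linarith

theorem weak_minimum_principle (hΩ : IsOpen Ω) (hΩb : Bornology.IsBounded Ω)
    (ha : 0 ≤ a) (haS : a < S) (hu : ParabolicRegular Ω S u)
    (hheat : ∀ t ∈ Ioo a S, ∀ x ∈ Ω, u t x < 0 → μ * u t x ≤ heatOp u t x)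
    (hlat : ∀ t ∈ Icc a S, ∀ x ∈ frontier Ω, 0 ≤ u t x) (hini : ∀ x ∈ closure Ω, 0 ≤ u a x) :
    ∀ t ∈ Icc a S, ∀ x ∈ closure Ω, 0 ≤ u t x := by
  have hbefore : ∀ b ∈ Ioo a S, ∀ x ∈ closure Ω, 0 ≤ u b x := by
    intro b hb x hx
    by_contra! hneg
    -- The rate `μ + 1` makes the differential inequality strict wherever `u < 0`.
    obtain ⟨t, ht, z, hz, hneg_min, hmin⟩ := exists_neg_isMinOn_exp_mul hΩ hΩb
      (hu.cont.mono (prod_mono (Icc_subset_Icc ha hb.2.le) Subset.rfl))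
      (fun t ht => hlat t ⟨ht.1, ht.2.trans hb.2.le⟩) hini hb.1.le hx hneg (μ + 1)
    have hupper := heatOp_le_of_isMinOn_exp_mul hΩ hu ha ht hb.2 hz hmin
    have hlower := hheat t ⟨ht.1, ht.2.trans_lt hb.2⟩ z hz hneg_min
    linarith
  intro t ht x hx
  rw [← closure_Ioo haS.ne] at ht
  refine le_on_closure (f := fun _ => 0) (fun s hs => hbefore s hs x hx) continuousOn_const ?_ ht
  rw [closure_Ioo haS.ne]
  exact hu.cont.comp (f := fun s => (s, x)) (by fun_prop)
    fun s hs => ⟨⟨ha.trans hs.1, hs.2⟩, hx⟩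

theorem comparison_principle {c : ℝ → (Fin n → ℝ) → ℝ} {C : ℝ} (hΩ : IsOpen Ω)
    (hΩb : Bornology.IsBounded Ω) (ha : 0 ≤ a) (haS : a < S)
    (hu : ParabolicRegular Ω S u) (hw : ParabolicRegular Ω S w)
    (hc : ∀ t ∈ Ioo a S, ∀ x ∈ Ω, -C ≤ c t x)
    (hheat : ∀ t ∈ Ioo a S, ∀ x ∈ Ω,
      heatOp w t x + c t x * w t x ≤ heatOp u t x + c t x * u t x)
    (hlat : ∀ t ∈ Icc a S, ∀ x ∈ frontier Ω, w t x ≤ u t x)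
    (hini : ∀ x ∈ closure Ω, w a x ≤ u a x) :
    ∀ t ∈ Icc a S, ∀ x ∈ closure Ω, w t x ≤ u t x := by
  have hsub := weak_minimum_principle (μ := C) hΩ hΩb ha haS (hu.sub hΩ hw) ?_
    (fun t ht x hx => sub_nonneg.2 (hlat t ht x hx)) (fun x hx => sub_nonneg.2 (hini x hx))
  · exact fun t ht x hx => sub_nonneg.1 (hsub t ht x hx)
  · intro t ht x hx hneg
    simp only [Pi.sub_apply] at hneg ⊢
    rw [hu.heatOp_sub hΩ hw ⟨ha.trans_lt ht.1, ht.2⟩ hx]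
    have hpotential : C * (u t x - w t x) ≤ -c t x * (u t x - w t x) :=
      mul_le_mul_of_nonpos_right (neg_le.1 (hc t ht x hx)) hneg.le
    linarith [hheat t ht x hx]

end MinimumPrinciple

/-! ### Positivity -/

section Positivity

variable {n : ℕ} {Ω : Set (Fin n → ℝ)} {S a κ C : ℝ} {u c f g : ℝ → (Fin n → ℝ) → ℝ}

/-- The travelling exponential `m e^{at - L xᵢ} - b`, used as a barrier for the heat operator. The
amplitude `m` and the offset `b` are parameters so that the family is closed under derivatives. -/
noncomputable def travellingExp (i : Fin n) (a L m b : ℝ) (t : ℝ) (x : Fin n → ℝ) : ℝ :=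
  m * Real.exp (a * t - L * x i) - b

lemma continuous_travellingExp (i : Fin n) (a L m b : ℝ) :
    Continuous fun p : ℝ × (Fin n → ℝ) => travellingExp i a L m b p.1 p.2 := by
  unfold travellingExp
  fun_prop

lemma hasDerivAt_travellingExp_time (i : Fin n) (a L m b t : ℝ) (x : Fin n → ℝ) :
    HasDerivAt (fun s => travellingExp i a L m b s x) (travellingExp i a L (a * m) 0 t x) t := by
  have hphase : HasDerivAt (fun s => a * s - L * x i) a t :=
    (hasDerivAt_const_mul a).sub_const _
  refine ((hphase.exp.const_mul m).sub_const b).congr_deriv ?_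
  simp only [travellingExp]
  ring

lemma hasDerivAt_travellingExp_update (i j : Fin n) (a L m b t : ℝ) (x : Fin n → ℝ) :
    HasDerivAt (fun s => travellingExp i a L m b t (Function.update x j s))
      (travellingExp i a L (if i = j then -(L * m) else 0) 0 t x) (x j) := by
  have hcoord : HasDerivAt (fun s => Function.update x j s i) (if i = j then 1 else 0) (x j) := by
    simpa [Pi.single_apply] using hasDerivAt_pi.1 (hasDerivAt_update x j (x j)) i
  have hphase := (hcoord.const_mul L).const_sub (a * t)
  refine ((hphase.exp.const_mul m).sub_const b).congr_deriv ?_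
  simp only [travellingExp, Function.update_eq_self]
  split_ifs <;> ring

lemma timeDeriv_travellingExp (i : Fin n) (a L m b : ℝ) :
    timeDeriv (travellingExp i a L m b) = travellingExp i a L (a * m) 0 :=
  funext₂ fun t x => (hasDerivAt_travellingExp_time i a L m b t x).deriv

lemma spatialDeriv_travellingExp (i j : Fin n) (a L m b : ℝ) :
    spatialDeriv (travellingExp i a L m b) j =
      travellingExp i a L (if i = j then -(L * m) else 0) 0 :=
  funext₂ fun t x => (hasDerivAt_travellingExp_update i j a L m b t x).deriv

lemma spatialDeriv2_travellingExp (i j k : Fin n) (a L m b : ℝ) :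
    spatialDeriv2 (travellingExp i a L m b) j k =
      travellingExp i a L (if i = j then -(L * if i = k then -(L * m) else 0) else 0) 0 := by
  unfold spatialDeriv2
  rw [spatialDeriv_travellingExp, spatialDeriv_travellingExp]

lemma heatOp_travellingExp (i : Fin n) (a L m b : ℝ) :
    heatOp (travellingExp i a L m b) = travellingExp i a L ((a - L ^ 2) * m) 0 := by
  have hlaplacian : laplacian (travellingExp i a L m b) = travellingExp i a L (L ^ 2 * m) 0 := by
    ext t x
    simp only [laplacian, spatialDeriv2_travellingExp]
    rw [Finset.sum_eq_single i (by simp +contextual [travellingExp, eq_comm]) (by simp)]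
    simp only [travellingExp, if_true]
    ring
  ext t x
  simp only [heatOp, hlaplacian, timeDeriv_travellingExp, travellingExp]
  ring

lemma parabolicRegular_travellingExp (i : Fin n) (a L m b : ℝ) (Ω : Set (Fin n → ℝ)) (S : ℝ) :
    ParabolicRegular Ω S (travellingExp i a L m b) where
  cont := (continuous_travellingExp i a L m b).continuousOn
  diff_t t _ x _ := (hasDerivAt_travellingExp_time i a L m b t x).differentiableAt
  diff_x t _ x _ j := (hasDerivAt_travellingExp_update i j a L m b t x).differentiableAt
  diff_xx t _ x _ j k := by
    rw [spatialDeriv_travellingExp]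
    exact (hasDerivAt_travellingExp_update _ _ _ _ _ _ _ _).differentiableAt
  cont_t := by
    rw [timeDeriv_travellingExp]
    exact (continuous_travellingExp _ _ _ _ _).continuousOn
  cont_x j := by
    rw [spatialDeriv_travellingExp]
    exact (continuous_travellingExp _ _ _ _ _).continuousOn
  cont_xx j k := by
    rw [spatialDeriv2_travellingExp]
    exact (continuous_travellingExp _ _ _ _ _).continuousOn

lemma exists_two_mul_lt_sq_sub_mul (hκ : 0 ≤ κ) {Q η : ℝ} (hQ : 0 ≤ Q) (hη : 0 < η) :
    ∃ L, 0 ≤ L ∧ 2 * (L * Q) < (L ^ 2 - κ) * η := by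
  set L := (2 * Q + 1) / η + κ * η with hLdef
  have hL : 0 ≤ L := by positivity
  have hκL : κ * η < L := lt_add_of_pos_left _ (by positivity)
  have hLη : L * η = 2 * Q + 1 + κ * η ^ 2 := by
    rw [hLdef]
    field_simp
  have hrest : 0 ≤ L * (κ * η ^ 2) := by positivity
  refine ⟨L, hL, ?_⟩
  calc 2 * (L * Q) < L * (2 * Q + 1 + κ * η ^ 2) - κ * η := by linarith
    _ = (L ^ 2 - κ) * η := by rw [← hLη]; ring

/- With `a = L² - κ` the pure exponential solves `∂ₜφ - Δφ + κφ = 0`. The offset `b` dominates it on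
`B` at time `t₀`, and for `L` large it exceeds `b` on all of `B` at time `t₁`. -/
lemma exists_barrier (i : Fin n) (hκ : 0 ≤ κ) {δ t₀ t₁ : ℝ} (hδ : 0 < δ) (ht : t₀ < t₁)
    {B : Set (Fin n → ℝ)} (hB : Bornology.IsBounded B) (S : ℝ) :
    ∃ φ : ℝ → (Fin n → ℝ) → ℝ, (∀ Ω, ParabolicRegular Ω S φ) ∧
      (∀ t x, heatOp φ t x + κ * φ t x ≤ 0) ∧ (∀ x ∈ B, φ t₀ x ≤ 0) ∧
      (∀ t ≤ S, ∀ x ∈ B, φ t x ≤ δ) ∧ ∀ x ∈ B, 0 < φ t₁ x := by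
  obtain ⟨Q, hQ, hnorm⟩ := hB.exists_pos_norm_le
  obtain ⟨L, hL, hspeed⟩ := exists_two_mul_lt_sq_sub_mul hκ hQ.le (sub_pos.2 ht)
  have hcoord : ∀ x ∈ B, |L * x i| ≤ L * Q := fun x hx => by
    rw [abs_mul, abs_of_nonneg hL]
    exact mul_le_mul_of_nonneg_left ((norm_le_pi_norm x i).trans (hnorm x hx)) hL
  have ha : 0 ≤ L ^ 2 - κ :=
    (pos_of_mul_pos_left ((by positivity : 0 ≤ 2 * (L * Q)).trans_lt hspeed)
      (sub_pos.2 ht).le).le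
  set a := L ^ 2 - κ
  set m := δ * Real.exp (-(a * S + L * Q))
  refine ⟨travellingExp i a L m (m * Real.exp (a * t₀ + L * Q)),
    fun Ω => parabolicRegular_travellingExp i a L m _ Ω S, fun t x => ?_, fun x hx => ?_,
    fun t htS x hx => ?_, fun x hx => ?_⟩
  · have : 0 ≤ κ * (m * Real.exp (a * t₀ + L * Q)) := by positivity
    rw [heatOp_travellingExp]
    simp only [travellingExp, a, sub_sub_cancel_left, neg_mul]
    linarith
  · have := neg_le_of_abs_le (hcoord x hx)
    exact sub_nonpos.2 (by gcongr; linarith)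
  · have := neg_le_of_abs_le (hcoord x hx)
    calc travellingExp i a L m _ t x
        ≤ m * Real.exp (a * t - L * x i) := sub_le_self _ (by positivity)
      _ ≤ m * Real.exp (a * S + L * Q) := by gcongr; linarith [mul_le_mul_of_nonneg_left htS ha]
      _ = δ := by rw [mul_assoc, ← Real.exp_add, neg_add_cancel, Real.exp_zero, mul_one]
  · have := le_of_abs_le (hcoord x hx)
    exact sub_pos.2 (by gcongr; linarith)

theorem ParabolicRegular.pos_of_le_lateral [NeZero n] (hΩ : IsOpen Ω)
    (hΩb : Bornology.IsBounded Ω) (ha : 0 ≤ a) (hu : ParabolicRegular Ω S u) (hκ : 0 ≤ κ)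
    (hheat : ∀ t ∈ Ioo a S, ∀ x ∈ Ω, 0 ≤ heatOp u t x + κ * u t x) {δ : ℝ} (hδ : 0 < δ)
    (hlat : ∀ t ∈ Icc a S, ∀ x ∈ frontier Ω, δ ≤ u t x) (hini : ∀ x ∈ closure Ω, 0 ≤ u a x)
    {t : ℝ} (ht : t ∈ Ioc a S) {x : Fin n → ℝ} (hx : x ∈ closure Ω) : 0 < u t x := by
  obtain ⟨φ, hφ, hsub, hφini, hφδ, hφpos⟩ := exists_barrier 0 hκ hδ ht.1 hΩb.closure S
  refine (hφpos x hx).trans_le ?_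
  exact comparison_principle (c := fun _ _ => κ) (C := -κ) hΩ hΩb ha (ht.1.trans_le ht.2) hu (hφ Ω)
    (by simp) (fun s hs z hz => (hsub s z).trans (hheat s hs z hz))
    (fun s hs z hz => (hφδ s hs.2 z (frontier_subset_closure hz)).trans (hlat s hs z hz))
    (fun z hz => (hφini z hz).trans (hini z hz)) t (Ioc_subset_Icc_self ht) x hx

lemma exists_pos_forall_le_of_forall_pos {X : Type*} [PseudoMetricSpace X] {K : Set X}
    (hK : IsCompact K) {v : ℝ → X → ℝ} {s : ℝ}
    (hv : ContinuousOn (fun p : ℝ × X => v p.1 p.2) (Icc a S ×ˢ K)) (hs : s ∈ Ioc a S)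
    (hpos : ∀ t ∈ Icc s S, ∀ x ∈ K, 0 < v t x) :
    ∃ t₀ ∈ Ico a s, ∃ δ > 0, ∀ t ∈ Icc t₀ S, ∀ x ∈ K, δ ≤ v t x := by
  obtain ⟨δ, hδ, hlower⟩ := (isCompact_Icc.prod hK).exists_forall_le' (a := 0)
    (hv.mono (prod_mono (Icc_subset_Icc_left hs.1.le) Subset.rfl)) fun p hp => hpos _ hp.1 _ hp.2
  obtain ⟨η, hη, hunif⟩ := Metric.uniformContinuousOn_iff.1
    ((isCompact_Icc.prod hK).uniformContinuousOn_of_continuous hv) (δ / 2) (half_pos hδ)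
  refine ⟨max a (s - η / 2), ⟨le_max_left _ _, max_lt hs.1 (by linarith)⟩, δ / 2, half_pos hδ,
    fun t ht x hx => ?_⟩
  obtain ⟨hat, hηt⟩ := max_le_iff.1 ht.1
  rcases le_total s t with hst | hts
  · exact (half_le_self hδ.le).trans (hlower (t, x) ⟨⟨hst, ht.2⟩, hx⟩)
  · have hclose : dist (v t x) (v s x) < δ / 2 := by
      refine hunif (t, x) ⟨⟨hat, ht.2⟩, hx⟩ (s, x) ⟨Ioc_subset_Icc_self hs, hx⟩ ?_
      rw [Prod.dist_eq, dist_self, max_eq_left dist_nonneg, Real.dist_eq, abs_lt]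
      constructor <;> linarith
    rw [Real.dist_eq, abs_lt] at hclose
    have : δ ≤ v s x := hlower (s, x) ⟨⟨le_rfl, hs.2⟩, hx⟩
    linarith

namespace IsClassicalSolution

lemma nonneg (hΩ : IsOpen Ω) (hΩb : Bornology.IsBounded Ω) (hS : 0 < S)
    (hu : IsClassicalSolution Ω S c f g u) (hc : ∀ t ∈ Ioo 0 S, ∀ x ∈ Ω, -C ≤ c t x)
    (hf : ∀ t ∈ Ioo 0 S, ∀ x ∈ Ω, 0 ≤ f t x) (hg : ∀ t ∈ Icc 0 S, ∀ x ∈ frontier Ω, 0 ≤ g t x) :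
    ∀ t ∈ Icc 0 S, ∀ x ∈ closure Ω, 0 ≤ u t x := by
  refine weak_minimum_principle (μ := C) hΩ hΩb le_rfl hS hu.toParabolicRegular ?_
    (fun t ht x hx => (hg t ht x hx).trans_eq (hu.lateral t ht x hx).symm)
    (fun x hx => (hu.initial x hx).ge)
  intro t ht x hx hneg
  have hpotential : C * u t x ≤ -c t x * u t x :=
    mul_le_mul_of_nonpos_right (neg_le.1 (hc t ht x hx)) hneg.le
  linarith [hu.heatOp_add_mul_eq ht hx, hf t ht x hx]

theorem le_of_potential_le (hΩ : IsOpen Ω) (hΩb : Bornology.IsBounded Ω) (hS : 0 < S)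
    {c' w : ℝ → (Fin n → ℝ) → ℝ} (hu : IsClassicalSolution Ω S c f g u)
    (hw : IsClassicalSolution Ω S c' f g w) (hc : ∀ t ∈ Ioo 0 S, ∀ x ∈ Ω, -C ≤ c t x)
    (hcc' : ∀ t ∈ Ioo 0 S, ∀ x ∈ Ω, c t x ≤ c' t x) (hf : ∀ t ∈ Ioo 0 S, ∀ x ∈ Ω, 0 ≤ f t x)
    (hg : ∀ t ∈ Icc 0 S, ∀ x ∈ frontier Ω, 0 ≤ g t x) :
    ∀ t ∈ Icc 0 S, ∀ x ∈ closure Ω, w t x ≤ u t x := by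
  have hu0 := hu.nonneg hΩ hΩb hS hc hf hg
  refine comparison_principle hΩ hΩb le_rfl hS hu.toParabolicRegular hw.toParabolicRegular
    (fun t ht x hx => (hc t ht x hx).trans (hcc' t ht x hx)) ?_
    (fun t ht x hx => by rw [hu.lateral t ht x hx, hw.lateral t ht x hx])
    (fun x hx => by rw [hu.initial x hx, hw.initial x hx])
  intro t ht x hx
  have hpotential : c t x * u t x ≤ c' t x * u t x := mul_le_mul_of_nonneg_right
    (hcc' t ht x hx) (hu0 t (Ioo_subset_Icc_self ht) x (subset_closure hx))
  linarith [hu.heatOp_add_mul_eq ht hx, hw.heatOp_add_mul_eq ht hx]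

theorem pos [NeZero n] (hΩ : IsOpen Ω) (hΩb : Bornology.IsBounded Ω)
    (hu : IsClassicalSolution Ω S c f g u) (hc : ∀ t ∈ Ioo 0 S, ∀ x ∈ Ω, |c t x| ≤ C)
    (hf : ∀ t ∈ Ioo 0 S, ∀ x ∈ Ω, 0 ≤ f t x) (hg : ∀ t ∈ Icc 0 S, ∀ x ∈ frontier Ω, 0 ≤ g t x)
    {s : ℝ} (hs : s ∈ Ioc 0 S) (hgpos : ∀ t ∈ Icc s S, ∀ x ∈ frontier Ω, 0 < g t x) :
    ∀ t ∈ Icc s S, ∀ x ∈ closure Ω, 0 < u t x := by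
  have hu0 := hu.nonneg hΩ hΩb (hs.1.trans_le hs.2)
    (fun t ht x hx => neg_le_of_abs_le (hc t ht x hx)) hf hg
  obtain ⟨t₀, ht₀, δ, hδ, hlat⟩ := exists_pos_forall_le_of_forall_pos
    (hΩb.isCompact_closure.of_isClosed_subset isClosed_frontier frontier_subset_closure)
    (hu.cont.mono (prod_mono Subset.rfl frontier_subset_closure)) hs fun t ht x hx => by
      rw [hu.lateral t ⟨hs.1.le.trans ht.1, ht.2⟩ x hx]
      exact hgpos t ht x hx
  intro t ht x hx
  refine hu.toParabolicRegular.pos_of_le_lateral (κ := |C|) hΩ hΩb ht₀.1 (abs_nonneg C) ?_ hδ hlat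
    (hu0 t₀ ⟨ht₀.1, ht₀.2.le.trans hs.2⟩) ⟨ht₀.2.trans_le ht.1, ht.2⟩ hx
  intro τ hτ z hz
  have hτS : τ ∈ Ioo 0 S := ⟨ht₀.1.trans_lt hτ.1, hτ.2⟩
  have hpotential : c τ z * u τ z ≤ |C| * u τ z := mul_le_mul_of_nonneg_right
    ((le_of_abs_le (hc τ hτS z hz)).trans (le_abs_self C))
    (hu0 τ (Ioo_subset_Icc_self hτS) z (subset_closure hz))
  linarith [hu.heatOp_add_mul_eq hτS hz, hf τ hτS z hz]

end IsClassicalSolution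

end Positivity

/-! ### Recovery of the semilinear term -/

section SemilinearTerm

variable {n : ℕ} {Ω : Set (Fin n → ℝ)} {S : ℝ}

lemma uDeriv_le_uDeriv_zero {F : ℝ → (Fin n → ℝ) → ℝ → ℝ} {t : ℝ} {x : Fin n → ℝ}
    (hF : Differentiable ℝ (uDeriv F t x)) (hnonpos : ∀ u, 0 ≤ u → uDeriv2 F t x u ≤ 0)
    (hnonneg : ∀ u, u ≤ 0 → 0 ≤ uDeriv2 F t x u) (u : ℝ) : uDeriv F t x u ≤ uDeriv F t x 0 :=
  isMaxOn_univ_of_deriv hF.continuous.continuousAt hF.differentiableOn hF.differentiableOn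
    (fun u hu => hnonneg u (le_of_lt hu)) (fun u hu => hnonpos u (le_of_lt hu)) (mem_univ u)

lemma C1InU.exists_abs_uDeriv_comp_le {F : ℝ → (Fin n → ℝ) → ℝ → ℝ} (hF : C1InU Ω S F)
    (hΩb : Bornology.IsBounded Ω) {v : ℝ → (Fin n → ℝ) → ℝ}
    (hv : ContinuousOn (fun p : ℝ × (Fin n → ℝ) => v p.1 p.2) (Icc 0 S ×ˢ closure Ω)) :
    ∃ C, ∀ t ∈ Icc 0 S, ∀ x ∈ closure Ω, |uDeriv F t x (v t x)| ≤ C := by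
  obtain ⟨C, hC⟩ := (isCompact_Icc.prod hΩb.isCompact_closure).exists_bound_of_continuousOn
    (hF.2.2.comp (continuousOn_fst.prodMk (continuousOn_snd.prodMk hv))
      fun p hp => ⟨hp.1, hp.2, mem_univ _⟩)
  exact ⟨C, fun t ht x hx => hC (t, x) ⟨ht, hx⟩⟩

end SemilinearTerm

end Paper

theorem statement11_general {n : ℕ} [NeZero n] {Ω : Set (Fin n → ℝ)} (hΩ : IsOpen Ω)
    (hΩb : Bornology.IsBounded Ω) (hΩne : Ω.Nonempty) {S δ₁ r κ M K ε₁ ε₂ : ℝ}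
    (hδ₁ : δ₁ ∈ Ioc 0 S) (hr : 0 < r) {χ : ℝ → (Fin n → ℝ) → ℝ}
    (hχ0 : ∀ t ∈ Icc 0 S, ∀ x ∈ frontier Ω, 0 ≤ χ t x)
    (hχpos : ∀ t ∈ Icc δ₁ S, ∀ x ∈ frontier Ω, 0 < χ t x)
    {F₁ F₂ : ℝ → (Fin n → ℝ) → ℝ → ℝ} (hF₁ : C1InU Ω S F₁)
    (hF₁κ : ∀ t ∈ Icc 0 S, ∀ x ∈ closure Ω, ∀ u, uDeriv F₁ t x u ≤ κ)
    (hF₂ : ∀ t ∈ Icc δ₁ S, ∀ x ∈ closure Ω, Differentiable ℝ (F₂ t x))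
    (hF0 : ∀ t ∈ Icc δ₁ S, ∀ x ∈ closure Ω, F₁ t x 0 = F₂ t x 0)
    (hF₂K : ∀ t ∈ Icc δ₁ S, ∀ x ∈ closure Ω, ∀ u, |u| ≤ M → |uDeriv F₂ t x u| ≤ K)
    {v₁ v₂ w₁ w₂ : ℝ → ℝ → (Fin n → ℝ) → ℝ}
    (hv₁ : ∀ l ∈ Ioo (-r) r,
      ContinuousOn (fun p : ℝ × (Fin n → ℝ) => v₁ l p.1 p.2) (Icc 0 S ×ˢ closure Ω))
    (hw₁ : ∀ l ∈ Ioo (-r) r, IsClassicalSolution Ω S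
      (fun t x => uDeriv F₁ t x (v₁ l t x)) (fun _ _ => 0) χ (w₁ l))
    (hzero : ∀ t ∈ Icc δ₁ S, ∀ x ∈ closure Ω, v₁ 0 t x = 0 ∧ v₂ 0 t x = 0)
    (hcont : ∀ t ∈ Icc δ₁ S, ∀ x ∈ closure Ω,
      ContinuousOn (fun l => v₁ l t x) (Icc (-r) r) ∧
      ContinuousOn (fun l => v₂ l t x) (Icc (-r) r))
    (hderiv : ∀ t ∈ Icc δ₁ S, ∀ x ∈ closure Ω, ∀ l ∈ Ioo (-r) r,
      HasDerivAt (fun μ => v₁ μ t x) (w₁ l t x) l ∧ HasDerivAt (fun μ => v₂ μ t x) (w₂ l t x) l)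
    (hM : ∀ l ∈ Icc (-r) r, ∀ t ∈ Icc δ₁ S, ∀ x ∈ closure Ω,
      |v₁ l t x| ≤ M ∧ |v₂ l t x| ≤ M ∧ |w₁ l t x| ≤ M)
    (hε : ∀ l ∈ Ioo (-r) r, ∀ t ∈ Icc δ₁ S, ∀ x ∈ closure Ω,
      |uDeriv F₁ t x (v₁ l t x) - uDeriv F₂ t x (v₂ l t x)| ≤ ε₁ ∧ |w₁ l t x - w₂ l t x| ≤ ε₂)
    {y : ℝ → (Fin n → ℝ) → ℝ}
    (hy : IsClassicalSolution Ω S (fun _ _ => κ) (fun _ _ => 0) χ y) :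
    0 < sInf ((fun p : ℝ × (Fin n → ℝ) => y p.1 p.2) '' (Icc δ₁ S ×ˢ closure Ω)) ∧
    ∀ t ∈ Icc δ₁ S, ∀ x ∈ closure Ω,
      ∀ s ∈ Icc (-(sInf ((fun p : ℝ × (Fin n → ℝ) => y p.1 p.2) ''
            (Icc δ₁ S ×ˢ closure Ω)) * r))
          (sInf ((fun p : ℝ × (Fin n → ℝ) => y p.1 p.2) '' (Icc δ₁ S ×ˢ closure Ω)) * r),
        |F₁ t x s - F₂ t x s| ≤ r * (M * ε₁ + 2 * K * ε₂) := by
  have hcompact : IsCompact (Icc δ₁ S ×ˢ closure Ω) := isCompact_Icc.prod hΩb.isCompact_closure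
  have hsub : Icc δ₁ S ⊆ Icc 0 S := Icc_subset_Icc_left hδ₁.1.le
  have hycont := hy.cont.mono (prod_mono hsub (Subset.refl (closure Ω)))
  have hypos := hy.pos hΩ hΩb (fun _ _ _ _ => le_rfl) (fun _ _ _ _ => le_rfl) hχ0 hδ₁ hχpos
  refine ⟨(hcompact.lt_sInf_iff_of_continuous
    ((nonempty_Icc.2 hδ₁.2).prod hΩne.closure) hycont 0).2 fun p hp => hypos _ hp.1 _ hp.2, ?_⟩
  intro t ht x hx s hs
  have hlower : ∀ l ∈ Ioo (-r) r, sInf ((fun p : ℝ × (Fin n → ℝ) => y p.1 p.2) ''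
      (Icc δ₁ S ×ˢ closure Ω)) ≤ w₁ l t x := by
    intro l hl
    obtain ⟨C, hC⟩ := hF₁.exists_abs_uDeriv_comp_le hΩb (hv₁ l hl)
    refine (csInf_le (hcompact.bddBelow_image hycont)
      ⟨(t, x), mk_mem_prod ht hx, rfl⟩ : _ ≤ y t x).trans ?_
    exact (hw₁ l hl).le_of_potential_le hΩ hΩb (hδ₁.1.trans_le hδ₁.2) hy
        (fun t ht x hx => neg_le_of_abs_le (hC t (Ioo_subset_Icc_self ht) x (subset_closure hx)))
        (fun t ht x hx => hF₁κ t (Ioo_subset_Icc_self ht) x (subset_closure hx) _)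
        (fun _ _ _ _ => le_rfl) hχ0 t (hsub ht) x hx
  obtain ⟨l, hl, rfl⟩ := Icc_subset_image_of_le_deriv hr.le (hcont t ht x hx).1
    (hzero t ht x hx).1 (fun l hl => (hderiv t ht x hx l hl).1) hlower hs
  exact abs_sub_le_of_abs_deriv_comp_sub_le hr (hF₁.2.1 t (hsub ht) x hx) (hF₂ t ht x hx)
    (hF0 t ht x hx) (hF₂K t ht x hx) (hcont t ht x hx).1 (hcont t ht x hx).2
    (hzero t ht x hx).1 (hzero t ht x hx).2 (fun l hl => (hderiv t ht x hx l hl).1)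
    (fun l hl => (hderiv t ht x hx l hl).2) (fun l hl => hM l hl t ht x hx)
    (fun l hl => hε l hl t ht x hx) hl

/-- Theorem 2 in reduced form: under the structural assumptions on `F₁`,
`F₂` and the two families of solutions and their linearizations, the constant
`a₂ := inf_{[δ₁,S] × cl Ω} y` is strictly positive and
`|F₁(t,x,s) − F₂(t,x,s)| ≤ 2r(Mε₁ + 2Kε₂)` on `(δ₁,S) × Ω × [−a₂r, a₂r]`. -/
theorem statement11 {n : ℕ} (hn : 2 ≤ n) (Ω : Set (Fin n → ℝ)) (hΩo : IsOpen Ω)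
    (hΩb : Bornology.IsBounded Ω) (hΩc : IsConnected Ω)
    (S δ₁ δ₂ r κ₀ M K ε₁ ε₂ : ℝ) (hS : 0 < S) (hδ₁ : 0 < δ₁) (hδ₁S : δ₁ < S) (hδ₂ : 0 < δ₂)
    (hr : 0 < r) (hκ₀ : 0 ≤ κ₀) (hM : 0 < M) (hK : 0 ≤ K) (hε₁ : 0 ≤ ε₁) (hε₂ : 0 ≤ ε₂)
    (χ : ℝ → (Fin n → ℝ) → ℝ)
    (hχc : ContinuousOn (fun p : ℝ × (Fin n → ℝ) => χ p.1 p.2) (Icc 0 S ×ˢ frontier Ω))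
    (hχ0 : ∀ t ∈ Icc 0 S, ∀ x ∈ frontier Ω, 0 ≤ χ t x)
    (hχδ : ∀ t ∈ Icc δ₁ S, ∀ x ∈ frontier Ω, χ t x = δ₂)
    (F₁ : ℝ → (Fin n → ℝ) → ℝ → ℝ) (hF₁ : C2InU Ω S F₁)
    (hF₁0 : ∀ t ∈ Icc 0 S, ∀ x ∈ closure Ω, F₁ t x 0 = 0)
    (hF₁conc : ∀ t ∈ Icc 0 S, ∀ x ∈ closure Ω,
      (∀ u : ℝ, 0 ≤ u → uDeriv2 F₁ t x u ≤ 0) ∧ (∀ u : ℝ, u ≤ 0 → 0 ≤ uDeriv2 F₁ t x u))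
    (hF₁κ : ∀ t ∈ Icc 0 S, ∀ x ∈ closure Ω, uDeriv F₁ t x 0 ≤ κ₀)
    (F₂ : ℝ → (Fin n → ℝ) → ℝ → ℝ) (hF₂ : C1InU Ω S F₂)
    (hF₂0 : ∀ t ∈ Icc 0 S, ∀ x ∈ closure Ω, F₂ t x 0 = 0)
    (hF₂K : ∀ t ∈ Icc 0 S, ∀ x ∈ closure Ω, ∀ u : ℝ, |u| ≤ M → |uDeriv F₂ t x u| ≤ K)
    (v₁ v₂ w₁ w₂ z₁ : ℝ → ℝ → (Fin n → ℝ) → ℝ)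
    (hsol1 : ∀ lam ∈ Icc (-r) r, IsClassicalSolution Ω S (fun _ _ => (0 : ℝ))
      (fun t x => -F₁ t x (v₁ lam t x)) (fun t x => lam * χ t x) (v₁ lam))
    (hlin1 : ∀ lam ∈ Icc (-r) r, IsClassicalSolution Ω S
      (fun t x => uDeriv F₁ t x (v₁ lam t x)) (fun _ _ => (0 : ℝ)) χ (w₁ lam))
    (hlin2 : ∀ lam ∈ Icc (-r) r, IsClassicalSolution Ω S
      (fun t x => uDeriv F₁ t x (v₁ lam t x))
      (fun t x => -uDeriv2 F₁ t x (v₁ lam t x) * (w₁ lam t x) ^ 2)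
      (fun _ _ => (0 : ℝ)) (z₁ lam))
    (hzero : ∀ t ∈ Icc 0 S, ∀ x ∈ closure Ω, v₁ 0 t x = 0 ∧ v₂ 0 t x = 0)
    (hcont : ∀ t ∈ Icc 0 S, ∀ x ∈ closure Ω,
      ContinuousOn (fun lam => v₁ lam t x) (Icc (-r) r) ∧
      ContinuousOn (fun lam => v₂ lam t x) (Icc (-r) r))
    (hderiv : ∀ t ∈ Icc 0 S, ∀ x ∈ closure Ω, ∀ lam ∈ Ioo (-r) r,
      HasDerivAt (fun μ => v₁ μ t x) (w₁ lam t x) lam ∧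
      HasDerivAt (fun μ => v₂ μ t x) (w₂ lam t x) lam)
    (hwcont : ∀ t ∈ Icc 0 S, ∀ x ∈ closure Ω,
      ContinuousOn (fun lam => w₁ lam t x) (Ioo (-r) r) ∧
      ContinuousOn (fun lam => w₂ lam t x) (Ioo (-r) r))
    (hderiv2 : ∀ t ∈ Icc 0 S, ∀ x ∈ closure Ω, ∀ lam ∈ Ioo (-r) r,
      HasDerivAt (fun μ => w₁ μ t x) (z₁ lam t x) lam)
    (hMbd : ∀ lam ∈ Icc (-r) r, ∀ t ∈ Icc 0 S, ∀ x ∈ closure Ω,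
      |v₁ lam t x| ≤ M ∧ |v₂ lam t x| ≤ M ∧ |w₁ lam t x| ≤ M)
    (hεbd : ∀ lam ∈ Ioo (-r) r, ∀ t ∈ Icc 0 S, ∀ x ∈ closure Ω,
      |uDeriv F₁ t x (v₁ lam t x) - uDeriv F₂ t x (v₂ lam t x)| ≤ ε₁ ∧
      |w₁ lam t x - w₂ lam t x| ≤ ε₂)
    (y : ℝ → (Fin n → ℝ) → ℝ)
    (hy : IsClassicalSolution Ω S (fun _ _ => κ₀) (fun _ _ => (0 : ℝ)) χ y) :
    0 < sInf ((fun p : ℝ × (Fin n → ℝ) => y p.1 p.2) '' (Icc δ₁ S ×ˢ closure Ω)) ∧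
    ∀ t ∈ Ioo δ₁ S, ∀ x ∈ Ω,
      ∀ s ∈ Icc (-(sInf ((fun p : ℝ × (Fin n → ℝ) => y p.1 p.2) ''
            (Icc δ₁ S ×ˢ closure Ω)) * r))
          (sInf ((fun p : ℝ × (Fin n → ℝ) => y p.1 p.2) '' (Icc δ₁ S ×ˢ closure Ω)) * r),
        |F₁ t x s - F₂ t x s| ≤ 2 * r * (M * ε₁ + 2 * K * ε₂) := by
  have : NeZero n := ⟨by lia⟩
  have hsub : Icc δ₁ S ⊆ Icc 0 S := Icc_subset_Icc_left hδ₁.le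
  obtain ⟨hpos, hbound⟩ := statement11_general hΩo hΩb hΩc.nonempty ⟨hδ₁, hδ₁S.le⟩ hr hχ0
    (fun t ht x hx => hδ₂.trans_eq (hχδ t ht x hx).symm) hF₁.1
    (fun t ht x hx u => (uDeriv_le_uDeriv_zero (hF₁.2.1 t ht x hx) (hF₁conc t ht x hx).1
      (hF₁conc t ht x hx).2 u).trans (hF₁κ t ht x hx))
    (fun t ht => hF₂.2.1 t (hsub ht))
    (fun t ht x hx => (hF₁0 t (hsub ht) x hx).trans (hF₂0 t (hsub ht) x hx).symm)
    (fun t ht => hF₂K t (hsub ht)) (fun l hl => (hsol1 l (Ioo_subset_Icc_self hl)).cont)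
    (fun l hl => hlin1 l (Ioo_subset_Icc_self hl)) (fun t ht => hzero t (hsub ht))
    (fun t ht => hcont t (hsub ht)) (fun t ht => hderiv t (hsub ht))
    (fun l hl t ht => hMbd l hl t (hsub ht)) (fun l hl t ht => hεbd l hl t (hsub ht)) hy
  refine ⟨hpos, fun t ht x hx s hs => ?_⟩
  refine (hbound t (Ioo_subset_Icc_self ht) x (subset_closure hx) s hs).trans ?_
  gcongr
  linarith
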